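/- Let p be a prime and let l, m, k be integers with |m| ≥ l > 0 and k > 0. The group H(l,m;k) = ⟨a, t; t⁻¹a⁻ᵏt·aˡ·t⁻¹aᵏt = aᵐ⟩ is residually a finite p-group if and only if |m| = l = p^r and k = p^s for some integers r ≥ 0 and s ≥ 0, and, in the case m = −l, additionally p = 2 and s ≤ r. -/

import Mathlib

/-- A group `X` is *residually a finite p-group* if every non-identity element is excluded
by some normal subgroup of `p`-power index. -/
def ResiduallyPGroup (p : ℕ) (X : Type*) [Group X] : Prop :=
  ∀ x : X, x ≠ 1 → ∃ N : Subgroup X, N.Normal ∧ x ∉ N ∧ ∃ k : ℕ, N.index = p ^ k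

/-- The single relator `(t⁻¹a⁻ᵏt)·aˡ·(t⁻¹aᵏt)·a⁻ᵐ` of the group `H(l,m;k)`,
with `a = FreeGroup.of 0` and `t = FreeGroup.of 1`. -/
def brunnerRels (l m k : ℤ) : Set (FreeGroup (Fin 2)) :=
  {(FreeGroup.of 1)⁻¹ * (FreeGroup.of 0) ^ (-k) * FreeGroup.of 1 * (FreeGroup.of 0) ^ l *
    (FreeGroup.of 1)⁻¹ * (FreeGroup.of 0) ^ k * FreeGroup.of 1 * (FreeGroup.of 0) ^ (-m)}

/-- The group `H(l,m;k) = ⟨a, t; t⁻¹a⁻ᵏt·aˡ·t⁻¹aᵏt = aᵐ⟩`. -/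
def BrunnerGroup (l m k : ℤ) : Type := PresentedGroup (brunnerRels l m k)

instance (l m k : ℤ) : Group (BrunnerGroup l m k) := by delta BrunnerGroup; infer_instance

/-!
`H(l,m;k)` is an HNN extension, with stable letter `t` conjugating `b` to `a ^ k`, of the
Baumslag–Solitar group `⟨a, b; b⁻¹aˡb = aᵐ⟩`, which is itself an HNN extension of `ℤ`.

*Sufficiency.* An HNN extension is residually a finite `p`-group if, in its finite `p`-quotients,
nontrivial elements of the base can be separated from `1` and elements of the base outside an
associated subgroup from that subgroup. Indeed, a word that stays reduced in a finite quotient `Q`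
is detected by the wreath product of `Q` with a free group: the stable letter is multiplied by a
function whose values are the free generators, one for each coset of the image of an associated
subgroup, and reducedness of the word says that the product of these values along the word is a
reduced word in the free group. Free groups are residually `p` by their unitriangular
representations over `ℤ/pⁿ`. Finite `p`-quotients of the Baumslag–Solitar group extend to `H(l,m;k)`
after adjoining a `k`-th root of the image of `b` in a wreath product, where `t` can be made to act
by translation on the base group.

*Necessity.* In a finite `p`-group the relation `b⁻¹aˡb = aᵐ` forces `⟨aˡ⟩ = ⟨aᵐ⟩`, so that `b`
normalizes this subgroup. If an element `g` outside an associated subgroup lay in its closure, a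
conjugate of `g` by the stable letter would normalize a cyclic subgroup in every finite
`p`-quotient, and some commutator would be trivial in each of them, contradicting Britton's lemma.
Hence `⟨aᵏ⟩` is separable, and so are `⟨aˡ⟩` and `⟨aᵐ⟩` if `l ≠ 1`, while for `l = 1` separability
of `⟨aᵏ⟩` gives `m = ±1`; separability makes `k`, `l` and `m` powers of `p` up to sign. The
conditions for `m = -l` come from nilpotency: an element `x` of a finite `p`-group `G` with
`x ∈ ⁅⟨⟨x⟩⟩, G⁆` is trivial.
-/

universe u

variable {p : ℕ} {G : Type*} [Group G] {H : Type*} [Group H]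

section Separation

/-- A normal subgroup whose index is a power of `p`, i.e. (for `p` prime) the kernel of a
homomorphism to a finite `p`-group. -/
structure IsPNormal (p : ℕ) (N : Subgroup G) : Prop where
  normal : N.Normal
  exists_index_eq_pow : ∃ k : ℕ, N.index = p ^ k

/-- `g` can be separated from the subgroup `A` in a finite `p`-quotient: some normal subgroup `N`
of `p`-power index has `g ∉ A N`. -/
def PSeparated (p : ℕ) (A : Subgroup G) (g : G) : Prop :=
  ∃ N : Subgroup G, IsPNormal p N ∧ g ∉ A ⊔ N

theorem residuallyPGroup_iff_pSeparated_bot :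
    ResiduallyPGroup p G ↔ ∀ g : G, g ≠ 1 → PSeparated p ⊥ g := by
  refine forall₂_congr fun g _ ↦ ⟨?_, ?_⟩
  · rintro ⟨N, hN, hgN, hind⟩
    exact ⟨N, ⟨hN, hind⟩, by rwa [bot_sup_eq]⟩
  · rintro ⟨N, ⟨hN, hind⟩, hgN⟩
    exact ⟨N, hN, by rwa [bot_sup_eq] at hgN, hind⟩

theorem isPNormal_top : IsPNormal p (⊤ : Subgroup G) :=
  ⟨inferInstance, 0, by simp⟩

theorem IsPNormal.inf [Fact p.Prime] {M N : Subgroup G} (hM : IsPNormal p M)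
    (hN : IsPNormal p N) : IsPNormal p (M ⊓ N) := by
  have := hM.normal
  have := hN.normal
  obtain ⟨i, hi⟩ := hM.exists_index_eq_pow
  obtain ⟨j, hj⟩ := hN.exists_index_eq_pow
  obtain ⟨k, -, hk⟩ := (Nat.dvd_prime_pow Fact.out).1 (hi ▸ M.relIndex_dvd_index_of_normal N)
  refine ⟨inferInstance, k + j, ?_⟩
  rw [← Subgroup.relIndex_mul_index (inf_le_right : M ⊓ N ≤ N), Subgroup.inf_relIndex_right, hk, hj,
    pow_add]

theorem isPNormal_ker [Fact p.Prime] (f : G →* H) [Finite f.range] (hf : IsPGroup p f.range) :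
    IsPNormal p f.ker :=
  ⟨inferInstance, by simpa only [Subgroup.index_ker] using IsPGroup.iff_card.1 hf⟩

theorem IsPNormal.comap [Fact p.Prime] {N : Subgroup H} (hN : IsPNormal p N) (f : G →* H) :
    IsPNormal p (N.comap f) := by
  have := hN.normal
  obtain ⟨k, hk⟩ := hN.exists_index_eq_pow
  obtain ⟨i, -, hi⟩ := (Nat.dvd_prime_pow Fact.out).1 (hk ▸ N.relIndex_dvd_index_of_normal f.range)
  exact ⟨inferInstance, i, by rw [Subgroup.index_comap, hi]⟩

theorem IsPNormal.exists_ker_eq [Fact p.Prime] {G : Type u} [Group G] {N : Subgroup G}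
    (hN : IsPNormal p N) :
    ∃ (Q : Type u) (_ : Group Q) (_ : Finite Q) (f : G →* Q), IsPGroup p Q ∧ f.ker = N := by
  have := hN.normal
  obtain ⟨k, hk⟩ := hN.exists_index_eq_pow
  have : N.FiniteIndex := ⟨by rw [hk]; exact pow_ne_zero _ (Fact.out : p.Prime).ne_zero⟩
  exact ⟨G ⧸ N, inferInstance, inferInstance, QuotientGroup.mk' N, IsPGroup.of_card hk,
    QuotientGroup.ker_mk' N⟩

theorem mem_sup_ker_iff {f : G →* H} {A : Subgroup G} {g : G} : g ∈ A ⊔ f.ker ↔ f g ∈ A.map f := by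
  rw [← Subgroup.comap_map_eq, Subgroup.mem_comap]

theorem pSeparated_of_hom [Fact p.Prime] [Finite H] (hH : IsPGroup p H) {f : G →* H}
    {A : Subgroup G} {g : G} (hg : f g ∉ A.map f) : PSeparated p A g :=
  ⟨f.ker, isPNormal_ker f (hH.to_subgroup _), mt mem_sup_ker_iff.1 hg⟩

theorem pSeparated_bot_of_hom [Fact p.Prime] [Finite H] (hH : IsPGroup p H) {f : G →* H} {g : G}
    (hg : f g ≠ 1) : PSeparated p ⊥ g :=
  pSeparated_of_hom hH (f := f) (by rwa [Subgroup.map_bot, Subgroup.mem_bot])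

theorem PSeparated.exists_forall [Fact p.Prime] {ι : Type*} {s : Set ι} (hs : s.Finite)
    {A : ι → Subgroup G} {g : ι → G} (h : ∀ i ∈ s, PSeparated p (A i) (g i)) :
    ∃ N : Subgroup G, IsPNormal p N ∧ ∀ i ∈ s, g i ∉ A i ⊔ N := by
  induction s, hs using Set.Finite.induction_on with
  | empty => exact ⟨⊤, isPNormal_top, by simp⟩
  | @insert a s _ _ ih =>
    rw [Set.forall_mem_insert] at h
    obtain ⟨M, hM, haM⟩ := h.1
    obtain ⟨N, hN, hsN⟩ := ih h.2
    refine ⟨M ⊓ N, hM.inf hN, Set.forall_mem_insert.2 ⟨?_, fun i hi ↦ ?_⟩⟩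
    · exact fun hmem ↦ haM ((sup_le_sup_left inf_le_left (A a) :) hmem)
    · exact fun hmem ↦ hsN i hi ((sup_le_sup_left inf_le_right (A i) :) hmem)

theorem PSeparated.mono {A B : Subgroup G} (hAB : A ≤ B) {g : G} (h : PSeparated p B g) :
    PSeparated p A g :=
  let ⟨N, hN, hg⟩ := h
  ⟨N, hN, fun hgA ↦ hg (sup_le_sup_right hAB N hgA)⟩

/-- The condition on `f` says that it induces an embedding of pro-`p` completions. -/
theorem PSeparated.map [Fact p.Prime] {f : G →* H}
    (hf : ∀ N : Subgroup G, IsPNormal p N → ∃ M : Subgroup H, IsPNormal p M ∧ M.comap f ≤ N)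
    {A : Subgroup G} {g : G} (h : PSeparated p A g) : PSeparated p (A.map f) (f g) := by
  obtain ⟨N, hN, hg⟩ := h
  obtain ⟨M, hM, hMN⟩ := hf N hN
  refine ⟨M, hM, fun hfg ↦ hg ?_⟩
  have := hM.normal
  obtain ⟨-, ⟨a, ha, rfl⟩, m, hm, ham⟩ := Subgroup.mem_sup_of_normal_right.1 hfg
  have hag : a⁻¹ * g ∈ N := hMN <| by
    rwa [Subgroup.mem_comap, map_mul, map_inv, ← ham, inv_mul_cancel_left]
  simpa using Subgroup.mul_mem_sup ha hag

theorem ResiduallyPGroup.of_injective [Fact p.Prime] (h : ResiduallyPGroup p H) {f : G →* H}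
    (hf : Function.Injective f) : ResiduallyPGroup p G := by
  intro x hx
  obtain ⟨N, hN, hxN, hind⟩ := h (f x) ((map_ne_one_iff f hf).2 hx)
  obtain ⟨hn, hi⟩ := IsPNormal.comap ⟨hN, hind⟩ f
  exact ⟨N.comap f, hn, hxN, hi⟩

theorem ResiduallyPGroup.congr [Fact p.Prime] (e : G ≃* H) :
    ResiduallyPGroup p G ↔ ResiduallyPGroup p H :=
  ⟨fun h ↦ h.of_injective (f := e.symm.toMonoidHom) e.symm.injective,
    fun h ↦ h.of_injective (f := e.toMonoidHom) e.injective⟩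

theorem ResiduallyPGroup.pSeparated_range_of_retraction [Fact p.Prime] (h : ResiduallyPGroup p G)
    {ρ : G →* G} (hρ : ∀ g, ρ (ρ g) = ρ g) {g : G} (hg : g ∉ ρ.range) :
    PSeparated p ρ.range g := by
  have hne : (ρ g)⁻¹ * g ≠ 1 := fun h1 ↦ hg ⟨g, inv_mul_eq_one.1 h1⟩
  obtain ⟨N, hN, hgN, hind⟩ := h _ hne
  have hNp : IsPNormal p N := ⟨hN, hind⟩
  refine ⟨N ⊓ N.comap ρ, hNp.inf (hNp.comap ρ), fun hmem ↦ hgN ?_⟩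
  have := (hNp.inf (hNp.comap ρ)).normal
  obtain ⟨-, ⟨x, rfl⟩, n, ⟨hn, hρn⟩, rfl⟩ := Subgroup.mem_sup_of_normal_right.1 hmem
  simpa only [map_mul, hρ, mul_inv_rev, mul_assoc, inv_mul_cancel_left] using
    N.mul_mem (N.inv_mem hρn) hn

theorem ResiduallyPGroup.eq_of_forall_hom {G : Type u} [Group G] [Fact p.Prime]
    (h : ResiduallyPGroup p G) {x y : G}
    (hxy : ∀ (Q : Type u) [Group Q] [Finite Q] (_ : IsPGroup p Q) (f : G →* Q), f x = f y) :
    x = y := by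
  rw [← mul_inv_eq_one]
  by_contra hne
  obtain ⟨N, hN, hxN, hind⟩ := h _ hne
  obtain ⟨Q, _, _, f, hQ, rfl⟩ := IsPNormal.exists_ker_eq ⟨hN, hind⟩
  exact hxN (by rw [MonoidHom.mem_ker, map_mul, map_inv, hxy Q hQ f, mul_inv_cancel])

end Separation

section PGroups

theorem isPGroup_multiplicative_zmod (p M : ℕ) : IsPGroup p (Multiplicative (ZMod (p ^ M))) :=
  IsPGroup.of_card (n := M) ((Nat.card_congr Multiplicative.toAdd).trans (Nat.card_zmod _))

theorem isPGroup_regularWreathProduct [Fact p.Prime] {D Q : Type*} [Group D] [Group Q] [Finite D]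
    [Finite Q] (hD : IsPGroup p D) (hQ : IsPGroup p Q) : IsPGroup p (D ≀ᵣ Q) := by
  obtain ⟨i, hi⟩ := IsPGroup.iff_card.1 hD
  obtain ⟨j, hj⟩ := IsPGroup.iff_card.1 hQ
  refine IsPGroup.of_card (n := i * p ^ j + j) ?_
  rw [RegularWreathProduct.card, hi, hj, ← pow_mul, ← pow_add]

end PGroups

section FreeGroup

theorem one_add_pow_prime_pow_eq_one [Fact p.Prime] {A : Type*} [Ring A] {n k : ℕ}
    (hA : (p : A) ^ (k + 1) = 0) {N : A} (hN : N ^ p ^ n = 0) : (1 + N) ^ p ^ (n + k) = 1 := by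
  open Polynomial in
  have hdvd : (p : ℤ[X]) ∣ (1 + X) ^ p ^ n - (1 + X ^ p ^ n) := by
    obtain ⟨r, hr⟩ := exists_add_pow_prime_pow_eq (Fact.out : p.Prime) (1 : ℤ[X]) X n
    exact ⟨X * r, by rw [hr]; ring⟩
  obtain ⟨r, hr⟩ := dvd_sub_pow_of_dvd_sub hdvd k
  have h := congrArg (Polynomial.aeval N) hr
  simpa [hN, hA, sub_eq_zero, ← pow_mul, ← pow_add] using h

/-- Upper triangular matrices with ones on the diagonal. -/
def unitriangular (n : ℕ) (R : Type*) [CommRing R] : Submonoid (Matrix (Fin n) (Fin n) R) where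
  carrier := {A | ∀ i j, j ≤ i → A i j = (1 : Matrix (Fin n) (Fin n) R) i j}
  one_mem' _ _ _ := rfl
  mul_mem' {A B} hA hB i j hji := by
    rw [Matrix.mul_apply, ← one_mul (1 : Matrix _ _ R), Matrix.mul_apply]
    refine Finset.sum_congr rfl fun c _ ↦ ?_
    rcases le_or_gt c i with hc | hc
    · rw [hA i c hc, Matrix.one_apply]
      split_ifs with h
      · rw [hB c j (h ▸ hji)]
      · simp only [zero_mul]
    · rw [hB c j (hji.trans hc.le), Matrix.one_apply_ne (hji.trans_lt hc).ne', mul_zero, mul_zero]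

theorem sub_one_pow_eq_zero_of_mem_unitriangular {n : ℕ} {R : Type*} [CommRing R]
    {A : Matrix (Fin n) (Fin n) R} (hA : A ∈ unitriangular n R) : (A - 1) ^ n = 0 := by
  have hlower (i j : Fin n) (hji : j ≤ i) : (A - 1) i j = 0 := by
    rw [Matrix.sub_apply, hA i j hji, sub_self]
  have hchar : (A - 1).charpoly = Polynomial.X ^ n := by
    rw [Matrix.charpoly_of_isUpperTriangular _ fun i j hji ↦ hlower i j hji.le]
    simp only [hlower _ _ le_rfl, map_zero, sub_zero, Finset.prod_const, Finset.card_univ,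
      Fintype.card_fin]
  have hcayley := Matrix.aeval_self_charpoly (A - 1)
  rwa [hchar, map_pow, Polynomial.aeval_X] at hcayley

theorem exists_pow_eq_one_of_mem_unitriangular [Fact p.Prime] {n k : ℕ} {R : Type*} [CommRing R]
    (hR : (p : R) ^ k = 0) {A : Matrix (Fin n) (Fin n) R} (hA : A ∈ unitriangular n R) :
    ∃ i, A ^ p ^ i = 1 := by
  refine ⟨n + k, ?_⟩
  rw [← add_sub_cancel 1 A]
  refine one_add_pow_prime_pow_eq_one ?_
    (pow_eq_zero_of_le (Nat.lt_pow_self (Fact.out : p.Prime).one_lt).le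
      (sub_one_pow_eq_zero_of_mem_unitriangular hA))
  rw [← Nat.cast_pow, ← Matrix.diagonal_natCast, Nat.cast_pow, pow_succ, hR, zero_mul,
    Matrix.diagonal_zero]

/-- The unit `1 + N` for an element `N` of square zero. -/
@[simps]
def oneAddUnit {A : Type*} [Ring A] (N : A) (hN : N * N = 0) : Aˣ where
  val := 1 + N
  inv := 1 - N
  val_inv := by simp [mul_sub, add_mul, hN]
  inv_val := by simp [sub_mul, mul_add, hN]

theorem val_oneAddUnit_zpow {A : Type*} [Ring A] {N : A} (hN : N * N = 0) (n : ℤ) :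
    ((oneAddUnit N hN ^ n : Aˣ) : A) = 1 + n * N := by
  induction n with
  | zero => simp
  | succ n ih =>
    have h : (n : A) * N * N = 0 := by rw [mul_assoc, hN, mul_zero]
    rw [zpow_add_one, Units.val_mul, ih, val_oneAddUnit]
    push_cast
    simp only [mul_add, add_mul, h, mul_one, one_mul]
    abel
  | pred n ih =>
    have h : (n : A) * N * N = 0 := by rw [mul_assoc, hN, mul_zero]
    rw [zpow_sub_one, Units.val_mul, ih, val_inv_oneAddUnit]
    push_cast
    simp only [mul_sub, add_mul, sub_mul, neg_mul, h, mul_one, one_mul]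
    abel

/-- For a word `s` in the generators, the image of the generator `x` under the representation by
unitriangular matrices that detects words with syllables `s` is `1 + superdiagonal R s x`. -/
def superdiagonal {X : Type*} [DecidableEq X] {n : ℕ} (R : Type*) [CommRing R] (s : Fin n → X)
    (x : X) : Matrix (Fin (n + 1)) (Fin (n + 1)) R :=
  ∑ k with s k = x, Matrix.single k.castSucc k.succ 1

theorem drop_last_ofFn {α : Type*} {n : ℕ} (f : Fin n → α) :
    (List.ofFn f).drop (Fin.last n) = [] := by
  simp

theorem drop_castSucc_ofFn {α : Type*} {n : ℕ} (f : Fin n → α) (k : Fin n) :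
    (List.ofFn f).drop k.castSucc = f k :: (List.ofFn f).drop k.succ := by
  simp [List.drop_eq_getElem_cons]

section Superdiagonal

variable {X : Type*} [DecidableEq X] {n : ℕ} (R : Type*) [CommRing R] (s : Fin n → X) (x : X)

theorem superdiagonal_mul_self (hs : ∀ i j : Fin n, j.val = i.val + 1 → s i ≠ s j) :
    superdiagonal R s x * superdiagonal R s x = 0 := by
  simp only [superdiagonal, Finset.sum_mul_sum]
  refine Finset.sum_eq_zero fun i hi ↦ Finset.sum_eq_zero fun j hj ↦ ?_
  rw [Matrix.single_mul_single_of_ne]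
  intro hij
  refine hs i j ?_ ?_
  · simpa using (congrArg Fin.val hij).symm
  · rw [(Finset.mem_filter.1 hi).2, (Finset.mem_filter.1 hj).2]

theorem superdiagonal_apply_eq_zero {i j : Fin (n + 1)} (hji : j ≤ i) :
    superdiagonal R s x i j = 0 := by
  rw [superdiagonal, Matrix.sum_apply]
  refine Finset.sum_eq_zero fun k _ ↦ Matrix.single_apply_of_ne _ _ _ _ _ ?_
  rintro ⟨rfl, rfl⟩
  exact (Fin.castSucc_lt_succ.not_ge hji)

theorem superdiagonal_mulVec_castSucc (v : Fin (n + 1) → R) (i : Fin n) :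
    (superdiagonal R s x).mulVec v i.castSucc = if s i = x then v i.succ else 0 := by
  simp only [superdiagonal, Matrix.sum_mulVec, Finset.sum_apply]
  split_ifs with h
  · rw [Finset.sum_eq_single_of_mem i (by simpa using h)]
    · simp [Matrix.single_mulVec]
    · intro j _ hji
      simp [Matrix.single_mulVec, hji.symm]
  · refine Finset.sum_eq_zero fun j hj ↦ ?_
    have : i ≠ j := by
      rintro rfl
      exact h (Finset.mem_filter.1 hj).2
    simp [Matrix.single_mulVec, this]

variable {s} (hs : ∀ i j : Fin n, j.val = i.val + 1 → s i ≠ s j)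

/-- The representation of a free group by unitriangular matrices that detects the words with
syllables `s`. -/
def superdiagonalRep : FreeGroup X →* (Matrix (Fin (n + 1)) (Fin (n + 1)) R)ˣ :=
  FreeGroup.lift fun x ↦ oneAddUnit (superdiagonal R s x) (superdiagonal_mul_self R s x hs)

theorem superdiagonalRep_mem_unitriangular (g : FreeGroup X) :
    (superdiagonalRep R hs g).val ∈ unitriangular (n + 1) R := by
  induction g using FreeGroup.induction_on with
  | C1 => simp
  | of x =>
    intro i j hji
    simp [superdiagonalRep, superdiagonal_apply_eq_zero R s x hji]
  | inv_of x =>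
    intro i j hji
    simp [superdiagonalRep, superdiagonal_apply_eq_zero R s x hji]
  | mul g h hg hh =>
    rw [map_mul, Units.val_mul]
    exact mul_mem hg hh

theorem superdiagonalRep_of_zpow_mulVec (x : X) (e : ℤ) (v : Fin (n + 1) → R) (i : Fin n) :
    (superdiagonalRep R hs (FreeGroup.of x ^ e)).val.mulVec v i.castSucc =
      v i.castSucc + e * if s i = x then v i.succ else 0 := by
  rw [map_zpow, superdiagonalRep, FreeGroup.lift_apply_of, val_oneAddUnit_zpow, Matrix.add_mulVec,
    Matrix.one_mulVec, ← zsmul_eq_mul, Matrix.smul_mulVec, Pi.add_apply, Pi.smul_apply,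
    superdiagonal_mulVec_castSucc, zsmul_eq_mul]

theorem superdiagonalRep_drop_mulVec (e : Fin n → ℤ) (k : Fin (n + 1)) :
    let v := (superdiagonalRep R hs
      ((List.ofFn fun i ↦ FreeGroup.of (s i) ^ e i).drop k).prod).val.mulVec (Pi.single (.last n) 1)
    (∀ i < k, v i = 0) ∧ v k = (((List.ofFn e).drop k).prod : ℤ) := by
  induction k using Fin.reverseInduction with
  | last =>
    simp only [drop_last_ofFn, List.prod_nil, map_one, Units.val_one, Matrix.one_mulVec]
    exact ⟨fun i hi ↦ Pi.single_eq_of_ne hi.ne _, by simp⟩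
  | cast k ih =>
    simp only [drop_castSucc_ofFn, List.prod_cons, map_mul, Units.val_mul, ← Matrix.mulVec_mulVec]
    refine ⟨fun i hi ↦ ?_, ?_⟩
    · obtain ⟨i, rfl⟩ := Fin.exists_castSucc_eq.2 (hi.trans_le (Fin.le_last _)).ne
      rw [superdiagonalRep_of_zpow_mulVec, ih.1 _ (hi.trans k.castSucc_lt_succ),
        ih.1 i.succ (by simpa using hi)]
      simp
    · rw [superdiagonalRep_of_zpow_mulVec, ih.1 _ k.castSucc_lt_succ, if_pos rfl, ih.2]
      simp

theorem superdiagonalRep_ne_one (hn : n ≠ 0) {e : Fin n → ℤ} (he : ((List.ofFn e).prod : R) ≠ 0) :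
    superdiagonalRep R hs (List.ofFn fun i ↦ FreeGroup.of (s i) ^ e i).prod ≠ 1 := by
  intro h
  have hkey := (superdiagonalRep_drop_mulVec R hs e 0).2
  rw [Fin.val_zero, List.drop_zero, List.drop_zero, h, Units.val_one, Matrix.one_mulVec,
    Pi.single_eq_of_ne (by simpa [Fin.ext_iff] using hn.symm)] at hkey
  exact he hkey.symm

end Superdiagonal

theorem exists_prod_ofFn_zpow_eq {X : Type*} (g : FreeGroup X) :
    ∃ (n : ℕ) (s : Fin n → X) (e : Fin n → ℤ), (∀ i j : Fin n, j.val = i.val + 1 → s i ≠ s j) ∧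
      (∀ i, e i ≠ 0) ∧ (List.ofFn fun i ↦ FreeGroup.of (s i) ^ e i).prod = g := by
  classical
  obtain ⟨w, hw⟩ : ∃ w : Monoid.CoprodI.Word fun _ : X ↦ FreeGroup Unit,
      w.prod = freeGroupEquivCoprodI g :=
    ⟨_, Monoid.CoprodI.Word.equiv.symm_apply_apply _⟩
  let L := w.toList
  refine ⟨L.length, fun i ↦ L[i].1, fun i ↦ FreeGroup.freeGroupUnitEquivInt L[i].2, ?_, ?_, ?_⟩
  · rintro ⟨i, hi⟩ ⟨_, hj⟩ rfl
    exact List.isChain_iff_getElem.1 w.chain_ne i hj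
  · intro i h0
    refine w.ne_one _ (List.getElem_mem i.2) (FreeGroup.freeGroupUnitEquivInt.injective ?_)
    exact h0.trans (by rfl)
  · have hof (x : X) (u : FreeGroup Unit) : FreeGroup.of x ^ FreeGroup.freeGroupUnitEquivInt u =
        freeGroupEquivCoprodI.symm (Monoid.CoprodI.of (i := x) u) := by
      obtain ⟨m, rfl⟩ := FreeGroup.freeGroupUnitEquivInt.symm.surjective u
      rw [Equiv.apply_symm_apply]
      change _ = freeGroupEquivCoprodI.symm (Monoid.CoprodI.of (FreeGroup.of () ^ m))
      simp
    apply freeGroupEquivCoprodI.injective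
    rw [← hw, Monoid.CoprodI.Word.prod, map_list_prod, List.map_ofFn]
    congr 1
    conv_rhs => rw [← List.ofFn_getElem (xs := w.toList), List.map_ofFn]
    congr 1
    funext i
    simp only [Function.comp_apply, hof, MulEquiv.apply_symm_apply]
    rfl

theorem residuallyPGroup_freeGroup [Fact p.Prime] (X : Type*) :
    ResiduallyPGroup p (FreeGroup X) := by
  classical
  intro g hg
  obtain ⟨n, s, e, hs, he, rfl⟩ := exists_prod_ofFn_zpow_eq g
  have hn : n ≠ 0 := by
    rintro rfl
    simp at hg
  have he0 : (List.ofFn e).prod ≠ 0 := by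
    simpa [List.prod_eq_zero_iff, List.mem_ofFn] using he
  obtain ⟨k, hk⟩ := (Int.finiteMultiplicity_iff (a := p) (b := (List.ofFn e).prod)).2
    ⟨by simpa using (Fact.out : p.Prime).ne_one, he0⟩
  let R := ZMod (p ^ (k + 1))
  have hR : (p : R) ^ (k + 1) = 0 := by rw [← Nat.cast_pow, ZMod.natCast_self]
  have hne : ((List.ofFn e).prod : R) ≠ 0 := by
    rw [Ne, ZMod.intCast_zmod_eq_zero_iff_dvd]
    exact_mod_cast hk
  have : NeZero (p ^ (k + 1)) := ⟨pow_ne_zero _ (Fact.out : p.Prime).ne_zero⟩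
  obtain ⟨hnormal, hindex⟩ := isPNormal_ker (p := p) (superdiagonalRep R hs) <| by
    rintro ⟨-, x, rfl⟩
    obtain ⟨i, hi⟩ := exists_pow_eq_one_of_mem_unitriangular hR
      (superdiagonalRep_mem_unitriangular R hs x)
    refine ⟨i, Subtype.ext (Units.ext ?_)⟩
    simpa using hi
  exact ⟨_, hnormal, superdiagonalRep_ne_one R hs hn hne, hindex⟩

end FreeGroup

section HNNExtension

open HNNExtension HNNExtension.NormalWord

variable {A B : Subgroup G} {φ : A ≃* B} {P Q : Type*} [Group P] [Group Q]
  (f : HNNExtension G A B φ →* Q)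

/-- Reading the word `L` in the Cayley graph of `Q`, starting at `q`, records the left cosets of the
image of `B` from which the letters `t ^ (±1)` depart, as a word in the free group on these
cosets. -/
def cosetWord : Q → List (ℤˣ × G) → List ((Q ⧸ B.map (f.comp of)) × Bool)
  | _, [] => []
  | q, (u, g) :: L => (((if u = 1 then q else q * (f t)⁻¹ : Q) : Q ⧸ B.map (f.comp of)), u = 1) ::
      cosetWord (q * f (t ^ (u : ℤ) * of g)) L

theorem map_notMem_of_conj_t {g : G} (hg : f (of g) ∉ A.map (f.comp of)) :
    f t * f (of g) * (f t)⁻¹ ∉ B.map (f.comp of) := by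
  rintro ⟨b, hb, hbg⟩
  refine hg ⟨φ.symm ⟨b, hb⟩, (φ.symm ⟨b, hb⟩).2, ?_⟩
  rw [MonoidHom.comp_apply] at hbg ⊢
  rw [equiv_symm_eq_conj, map_mul, map_mul, map_inv, hbg]
  group

theorem isReduced_cosetWord {L : List (ℤˣ × G)}
    (hL : L.IsChain fun x y ↦ x.2 ∈ toSubgroup A B x.1 → x.1 = y.1)
    (hf : ∀ x ∈ L, x.2 ∉ toSubgroup A B x.1 →
      f (of x.2) ∉ (toSubgroup A B x.1).map (f.comp of)) (q : Q) :
    FreeGroup.IsReduced (cosetWord f q L) := by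
  induction L generalizing q with
  | nil => simp [cosetWord]
  | cons x L ih =>
    obtain ⟨u, g⟩ := x
    have ih' := ih hL.tail (fun x hx ↦ hf x (List.mem_cons_of_mem _ hx))
      (q * f (t ^ (u : ℤ) * of g))
    rcases L with _ | ⟨⟨v, h⟩, L⟩
    · simp [cosetWord]
    have hchain : g ∈ toSubgroup A B u → u = v := (List.isChain_cons_cons.1 hL).1
    have hgf := hf (u, g) List.mem_cons_self
    refine FreeGroup.isReduced_cons_cons.2 ⟨fun heq ↦ ?_, ih'⟩
    rcases Int.units_eq_one_or u with rfl | rfl <;> rcases Int.units_eq_one_or v with rfl | rfl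
    · rfl
    · refine absurd ?_ (map_notMem_of_conj_t f (hgf (mt hchain (by decide))))
      simpa [mul_assoc] using QuotientGroup.eq.1 heq
    · refine absurd ?_ (hgf (mt hchain (by decide)))
      simpa [mul_assoc] using QuotientGroup.eq.1 heq
    · rfl

open RegularWreathProduct

/-- The stable letter of an HNN extension may be multiplied by any function on the cosets of the
image of the second associated subgroup. -/
def twist (ψ : FreeGroup (Q ⧸ B.map (f.comp of)) →* P) : HNNExtension G A B φ →* P ≀ᵣ Q :=
  lift (inl.comp (f.comp of))
    (⟨fun x ↦ ψ (FreeGroup.of ((x⁻¹ : Q) : Q ⧸ B.map (f.comp of))), 1⟩ * inl (f t)) <| by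
    intro a
    have hcomm : f t * f (of (a : G)) = f (of (φ a : G)) * f t := by
      rw [← map_mul, t_mul_of, map_mul]
    ext x
    · simp only [MonoidHom.coe_comp, Function.comp_apply, mul_left, inv_one, one_mul, left_inl,
        Pi.one_apply, mul_right, right_inl, Pi.mul_apply, mul_one, mul_inv_rev, inv_inv]
      congr 2
      rw [QuotientGroup.eq]
      simpa using ⟨φ a, (φ a).2, rfl⟩
    · simpa using hcomm

@[simp]
theorem twist_of (ψ : FreeGroup (Q ⧸ B.map (f.comp of)) →* P) (g : G) :
    twist f ψ (of g) = inl (f (of g)) := by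
  simp [twist]

@[simp]
theorem twist_t (ψ : FreeGroup (Q ⧸ B.map (f.comp of)) →* P) :
    twist f ψ t =
      ⟨fun x ↦ ψ (FreeGroup.of ((x⁻¹ : Q) : Q ⧸ B.map (f.comp of))), 1⟩ * inl (f t) := by
  simp [twist]

theorem left_twist_prod (ψ : FreeGroup (Q ⧸ B.map (f.comp of)) →* P) (L : List (ℤˣ × G)) (q : Q) :
    (twist f ψ (L.map fun x ↦ t ^ (x.1 : ℤ) * of x.2).prod).left q⁻¹ =
      ψ (FreeGroup.mk (cosetWord f q L)) := by
  induction L generalizing q with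
  | nil => simp [cosetWord, ← FreeGroup.one_eq_mk]
  | cons x L ih =>
    obtain ⟨u, g⟩ := x
    have hcons (c : (Q ⧸ B.map (f.comp of)) × Bool) (L) :
        FreeGroup.mk (c :: L) = FreeGroup.mk [c] * FreeGroup.mk L := by
      rw [FreeGroup.mul_mk, List.singleton_append]
    rw [List.map_cons, List.prod_cons, map_mul, cosetWord, hcons, map_mul ψ, ← ih, map_mul]
    rcases Int.units_eq_one_or u with rfl | rfl
    · simp [mul_assoc, FreeGroup.of]
    · have hinv (c : Q ⧸ B.map (f.comp of)) : FreeGroup.mk [(c, false)] = (FreeGroup.of c)⁻¹ := by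
        simp [FreeGroup.of, FreeGroup.inv_mk, FreeGroup.invRev]
      simp [mul_assoc, hinv]

theorem pSeparated_bot_prod [Fact p.Prime] [Finite Q] (hQ : IsPGroup p Q) {w : ReducedWord G A B}
    (hnil : w.toList ≠ []) (hf : ∀ x ∈ w.toList, x.2 ∉ toSubgroup A B x.1 →
      f (of x.2) ∉ (toSubgroup A B x.1).map (f.comp of)) :
    PSeparated p ⊥ (w.prod φ) := by
  classical
  have hne : FreeGroup.mk (cosetWord f 1 w.toList) ≠ 1 := by
    obtain ⟨x, L, hL⟩ := List.exists_cons_of_ne_nil hnil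
    intro h
    have hword := congrArg FreeGroup.toWord h
    rw [FreeGroup.toWord_mk, (isReduced_cosetWord f w.chain hf 1).reduce_eq, hL] at hword
    simp [cosetWord] at hword
  obtain ⟨M, hM, hMne⟩ :=
    residuallyPGroup_iff_pSeparated_bot.1 (residuallyPGroup_freeGroup (p := p) _) _ hne
  obtain ⟨P, _, _, ψ, hP, rfl⟩ := hM.exists_ker_eq
  rw [bot_sup_eq, MonoidHom.mem_ker, ← left_twist_prod] at hMne
  refine pSeparated_bot_of_hom (isPGroup_regularWreathProduct hP hQ) (f := twist f ψ)
    fun h ↦ hMne ?_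
  rw [ReducedWord.prod, map_mul, twist_of] at h
  simpa using congrFun (congrArg RegularWreathProduct.left h) (f (of w.head))

theorem residuallyPGroup_hnnExtension [Fact p.Prime]
    (hsep : ∀ (u : ℤˣ), ∀ g ∉ toSubgroup A B u,
      PSeparated p ((toSubgroup A B u).map (of (φ := φ))) (of g))
    (hbase : ∀ g : G, g ≠ 1 → PSeparated p ⊥ (of (φ := φ) g)) :
    ResiduallyPGroup p (HNNExtension G A B φ) := by
  classical
  refine residuallyPGroup_iff_pSeparated_bot.2 fun x hx ↦ ?_
  let d : TransversalPair G A B := Classical.arbitrary _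
  obtain ⟨w, rfl⟩ : ∃ w : NormalWord d, w.prod φ = x :=
    ⟨_, (NormalWord.equiv φ d).symm_apply_apply x⟩
  by_cases hnil : w.toList = []
  · rw [ReducedWord.prod, hnil, List.map_nil, List.prod_nil, mul_one] at hx ⊢
    exact hbase _ fun h ↦ hx (by rw [h, map_one])
  have hfin : {x | x ∈ w.toList ∧ x.2 ∉ toSubgroup A B x.1}.Finite :=
    (List.finite_toSet w.toList).subset fun x hx ↦ hx.1
  obtain ⟨N, hN, hNw⟩ := PSeparated.exists_forall hfin fun x hx ↦ hsep x.1 x.2 hx.2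
  obtain ⟨Q, _, _, f, hQ, rfl⟩ := hN.exists_ker_eq
  refine pSeparated_bot_prod f hQ hnil fun x hx hxA ↦ ?_
  rw [← Subgroup.map_map]
  exact mt mem_sup_ker_iff.2 (hNw x ⟨hx, hxA⟩)

theorem residuallyPGroup_hnnExtension_of_embedding [Fact p.Prime] (hG : ResiduallyPGroup p G)
    (hsep : ∀ (u : ℤˣ), ∀ g ∉ toSubgroup A B u, PSeparated p (toSubgroup A B u) g)
    (hext : ∀ N : Subgroup G, IsPNormal p N →
      ∃ M : Subgroup (HNNExtension G A B φ), IsPNormal p M ∧ M.comap of ≤ N) :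
    ResiduallyPGroup p (HNNExtension G A B φ) :=
  residuallyPGroup_hnnExtension (fun u g hg ↦ (hsep u g hg).map hext) fun g hg ↦ by
    simpa using (residuallyPGroup_iff_pSeparated_bot.1 hG g hg).map hext

end HNNExtension

section CyclicHNN

open HNNExtension Subgroup

/-- The isomorphism of cyclic subgroups sending the generator `x` to the generator `y`. -/
noncomputable def zpowersMulEquiv {x y : G} (h : orderOf x = orderOf y) : zpowers x ≃* zpowers y :=
  mulEquivOfOrderOfEq (g := ⟨x, mem_zpowers x⟩) (g' := ⟨y, mem_zpowers y⟩)
    (fun ⟨_, i, hi⟩ ↦ ⟨i, Subtype.ext hi⟩) (fun ⟨_, i, hi⟩ ↦ ⟨i, Subtype.ext hi⟩)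
    (by simpa only [orderOf_mk] using h)

@[simp]
theorem zpowersMulEquiv_self {x y : G} (h : orderOf x = orderOf y) :
    zpowersMulEquiv h ⟨x, mem_zpowers x⟩ = ⟨y, mem_zpowers y⟩ :=
  mulEquivOfOrderOfEq_apply_gen ..

/-- The HNN extension of `G` with cyclic associated subgroups in which the stable letter `t`
conjugates `x` to `y`, that is `t * x * t⁻¹ = y`. -/
abbrev CyclicHNN (x y : G) (h : orderOf x = orderOf y) : Type _ :=
  HNNExtension G (zpowers x) (zpowers y) (zpowersMulEquiv h)

variable {x y : G} {h : orderOf x = orderOf y}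

theorem CyclicHNN.t_mul_of : t * of x = of (φ := zpowersMulEquiv h) y * t := by
  simpa using HNNExtension.t_mul_of (φ := zpowersMulEquiv h) ⟨x, mem_zpowers x⟩

/-- The universal property of `CyclicHNN`. -/
noncomputable def CyclicHNN.lift (f : G →* H) (τ : H) (hτ : τ * f x = f y * τ) :
    CyclicHNN x y h →* H :=
  HNNExtension.lift f τ <| by
    rintro ⟨_, i, rfl⟩
    have hi : zpowersMulEquiv h ⟨x ^ i, i, rfl⟩ = ⟨y, mem_zpowers y⟩ ^ i := by
      rw [← zpowersMulEquiv_self h, ← map_zpow]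
      rfl
    rw [hi, coe_zpow, map_zpow, map_zpow]
    exact SemiconjBy.zpow_right hτ i

@[simp]
theorem CyclicHNN.lift_t (f : G →* H) (τ : H) (hτ : τ * f x = f y * τ) :
    lift (h := h) f τ hτ t = τ :=
  HNNExtension.lift_t ..

@[simp]
theorem CyclicHNN.lift_of (f : G →* H) (τ : H) (hτ : τ * f x = f y * τ) (g : G) :
    lift (h := h) f τ hτ (of g) = f g :=
  HNNExtension.lift_of ..

end CyclicHNN

section Brunner

open HNNExtension Multiplicative

theorem orderOf_ofAdd_eq_zero (n : ℤ) [NeZero n] : orderOf (ofAdd n) = 0 := by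
  rw [orderOf_ofAdd_eq_addOrderOf, addOrderOf_eq_zero_iff]
  exact not_isOfFinAddOrder_of_isAddTorsionFree (NeZero.ne n)

/-- The Baumslag–Solitar group `⟨a, b; b⁻¹aˡb = aᵐ⟩`, as an HNN extension of `ℤ` with stable letter
`b`. -/
abbrev BaumslagSolitar (l m : ℤ) [NeZero l] [NeZero m] : Type :=
  CyclicHNN (ofAdd m) (ofAdd l) <| by rw [orderOf_ofAdd_eq_zero, orderOf_ofAdd_eq_zero]

namespace BaumslagSolitar

variable {l m : ℤ} [NeZero l] [NeZero m]

/-- The generator `a` of the Baumslag–Solitar group `⟨a, b; b⁻¹aˡb = aᵐ⟩`. -/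
noncomputable def a : BaumslagSolitar l m := of (ofAdd 1)

/-- The generator `b` of the Baumslag–Solitar group `⟨a, b; b⁻¹aˡb = aᵐ⟩`. -/
noncomputable def b : BaumslagSolitar l m := t

theorem a_zpow (i : ℤ) : (a : BaumslagSolitar l m) ^ i = of (ofAdd i) := by
  rw [a, ← map_zpow, ← ofAdd_zsmul, smul_eq_mul, mul_one]

theorem b_mul_a_zpow : (b : BaumslagSolitar l m) * a ^ m = a ^ l * b := by
  rw [a_zpow, a_zpow]
  exact CyclicHNN.t_mul_of

theorem semiconjBy_map_b (f : BaumslagSolitar l m →* G) :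
    SemiconjBy (f b) (f a ^ m) (f a ^ l) := by
  simpa [SemiconjBy] using congrArg f b_mul_a_zpow

/-- The universal property of the Baumslag–Solitar group. -/
noncomputable def lift (α β : G) (h : β * α ^ m = α ^ l * β) : BaumslagSolitar l m →* G :=
  CyclicHNN.lift (zpowersHom G α) β (by simpa using h)

variable {α β : G} (h : β * α ^ m = α ^ l * β)

@[simp]
theorem lift_a : lift α β h a = α := by
  simp [lift, a]

@[simp]
theorem lift_b : lift α β h b = β :=
  CyclicHNN.lift_t ..

theorem range_lift_le {K : Subgroup G} (hα : α ∈ K) (hβ : β ∈ K) : (lift α β h).range ≤ K := by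
  rintro _ ⟨g, rfl⟩
  induction g using HNNExtension.induction_on with
  | of g => rw [← ofAdd_toAdd g, ← a_zpow, map_zpow, lift_a]; exact zpow_mem hα _
  | t => exact (lift_b h).symm ▸ hβ
  | mul x y hx hy => exact (map_mul (lift α β h) x y).symm ▸ mul_mem hx hy
  | inv x hx => exact (map_inv (lift α β h) x).symm ▸ inv_mem hx

theorem hom_ext {f g : BaumslagSolitar l m →* G} (ha : f a = g a) (hb : f b = g b) : f = g :=
  HNNExtension.hom_ext (MonoidHom.ext_mint ha) hb

theorem orderOf_a_zpow (i : ℤ) [NeZero i] : orderOf ((a : BaumslagSolitar l m) ^ i) = 0 := by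
  rw [a_zpow, orderOf_injective _ (of_injective _), orderOf_ofAdd_eq_zero]

theorem orderOf_b : orderOf (b : BaumslagSolitar l m) = 0 := by
  have h := orderOf_map_dvd (lift 1 (ofAdd (1 : ℤ)) (by simp)) (b : BaumslagSolitar l m)
  rwa [lift_b, orderOf_ofAdd_eq_zero, zero_dvd_iff] at h

end BaumslagSolitar

open BaumslagSolitar

/-- The group `⟨a, b, t; b⁻¹aˡb = aᵐ, t⁻¹aᵏt = b⟩`, as an HNN extension of the Baumslag–Solitar
group with stable letter `t`. -/
abbrev BrunnerHNN (l m k : ℤ) [NeZero l] [NeZero m] [NeZero k] : Type :=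
  CyclicHNN (b : BaumslagSolitar l m) (a ^ k) <| by rw [orderOf_b, orderOf_a_zpow]

namespace BrunnerGroup

variable {l m k : ℤ}

/-- The generator `a` of `H(l,m;k)`. -/
def a : BrunnerGroup l m k := (PresentedGroup.of 0 : PresentedGroup (brunnerRels l m k))

/-- The generator `t` of `H(l,m;k)`. -/
def t : BrunnerGroup l m k := (PresentedGroup.of 1 : PresentedGroup (brunnerRels l m k))

theorem conj_a_zpow_mul :
    ((t : BrunnerGroup l m k)⁻¹ * a ^ k * t) * a ^ m = a ^ l * (t⁻¹ * a ^ k * t) := by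
  have hrel : (t : BrunnerGroup l m k)⁻¹ * a ^ (-k) * t * a ^ l * t⁻¹ * a ^ k * t * a ^ (-m) = 1 :=
    PresentedGroup.one_of_mem (rels := brunnerRels l m k) (Set.mem_singleton _)
  rw [zpow_neg, zpow_neg, mul_inv_eq_one] at hrel
  rw [← hrel]
  group

/-- The universal property of `H(l,m;k)`. -/
def lift (α τ : G) (h : (τ⁻¹ * α ^ k * τ) * α ^ m = α ^ l * (τ⁻¹ * α ^ k * τ)) :
    BrunnerGroup l m k →* G :=
  PresentedGroup.toGroup (rels := brunnerRels l m k) (f := ![α, τ]) <| by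
    rintro _ rfl
    simp only [map_mul, map_inv, map_zpow, FreeGroup.lift_apply_of, Matrix.cons_val_zero,
      Matrix.cons_val_one, zpow_neg, mul_inv_eq_one]
    rw [← mul_left_cancel_iff (a := τ⁻¹ * α ^ k * τ), h]
    group

variable {α τ : G} (h : (τ⁻¹ * α ^ k * τ) * α ^ m = α ^ l * (τ⁻¹ * α ^ k * τ))

@[simp]
theorem lift_a : lift α τ h a = α :=
  PresentedGroup.toGroup.of _

@[simp]
theorem lift_t : lift α τ h t = τ :=
  PresentedGroup.toGroup.of _

theorem hom_ext {f g : BrunnerGroup l m k →* G} (ha : f a = g a) (ht : f t = g t) : f = g :=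
  PresentedGroup.ext (rels := brunnerRels l m k) <| Fin.forall_fin_two.2 ⟨ha, ht⟩

end BrunnerGroup

theorem BrunnerHNN.of_b {l m k : ℤ} [NeZero l] [NeZero m] [NeZero k] :
    (of b : BrunnerHNN l m k) = t⁻¹ * of a ^ k * t := by
  rw [mul_assoc, ← map_zpow, ← CyclicHNN.t_mul_of, inv_mul_cancel_left]

/-- The two presentations of `H(l,m;k)` agree. -/
noncomputable def brunnerGroupMulEquiv (l m k : ℤ) [NeZero l] [NeZero m] [NeZero k] :
    BrunnerGroup l m k ≃* BrunnerHNN l m k :=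
  MonoidHom.toMulEquiv
    (BrunnerGroup.lift (of a) t <| by
      rw [← BrunnerHNN.of_b, ← map_zpow, ← map_mul, b_mul_a_zpow, map_mul, map_zpow])
    (CyclicHNN.lift
      (BaumslagSolitar.lift BrunnerGroup.a (BrunnerGroup.t⁻¹ * BrunnerGroup.a ^ k * BrunnerGroup.t)
        BrunnerGroup.conj_a_zpow_mul)
      BrunnerGroup.t (by simp [mul_assoc]))
    (BrunnerGroup.hom_ext (by simp) (by simp))
    (HNNExtension.hom_ext (BaumslagSolitar.hom_ext (by simp) (by simp [BrunnerHNN.of_b])) (by simp))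

end Brunner

namespace BaumslagSolitar

open HNNExtension DihedralGroup Multiplicative Subgroup

variable {l m : ℤ} [NeZero l] [NeZero m]

/-- The homomorphism to a dihedral group sending `a` to the rotation `r 1` and `b` to a reflection,
or to `1` if `m = l`. -/
noncomputable def toDihedral (hml : m = l ∨ m = -l) (n : ℕ) :
    BaumslagSolitar l m →* DihedralGroup n :=
  lift (r 1) (if m = l then 1 else sr 0) <| by
    split_ifs with h
    · rw [h, one_mul, mul_one]
    · simp [hml.resolve_left h]

variable (hml : m = l ∨ m = -l)

@[simp]
theorem toDihedral_a_zpow (n : ℕ) (i : ℤ) : toDihedral hml n (a ^ i) = r i := by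
  simp [toDihedral]

theorem toDihedral_b (n : ℕ) : toDihedral hml n b = if m = l then 1 else sr 0 :=
  lift_b _

theorem toDihedral_eq_r_or_eq_sr (g : BaumslagSolitar l m) :
    ∃ i : ℤ, (∀ n, toDihedral hml n g = r i) ∨ ∀ n, toDihedral hml n g = sr i := by
  induction g using HNNExtension.induction_on with
  | of g => exact ⟨toAdd g, .inl fun n ↦ by rw [← toDihedral_a_zpow hml, a_zpow, ofAdd_toAdd]⟩
  | t =>
    refine ⟨0, ?_⟩
    change (∀ n, toDihedral hml n b = _) ∨ ∀ n, toDihedral hml n b = _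
    by_cases h : m = l <;> simp [toDihedral_b, h]
  | mul x y hx hy =>
    obtain ⟨i, hi | hi⟩ := hx <;> obtain ⟨j, hj | hj⟩ := hy
    · exact ⟨i + j, .inl fun n ↦ by simp [hi, hj]⟩
    · exact ⟨j - i, .inr fun n ↦ by simp [hi, hj]⟩
    · exact ⟨i + j, .inr fun n ↦ by simp [hi, hj]⟩
    · exact ⟨j - i, .inl fun n ↦ by simp [hi, hj]⟩
  | inv x hx =>
    obtain ⟨i, hi | hi⟩ := hx
    · exact ⟨-i, .inl fun n ↦ by simp [hi]⟩
    · exact ⟨i, .inr fun n ↦ by simp [hi]⟩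

variable [Fact p.Prime]

theorem isPNormal_ker_toDihedral (hp : m ≠ l → p = 2) (n : ℕ) :
    IsPNormal p (toDihedral hml (p ^ n)).ker := by
  have : NeZero (p ^ n) := ⟨pow_ne_zero _ (Fact.out : p.Prime).ne_zero⟩
  refine isPNormal_ker _ ?_
  by_cases h : m = l
  · have hcard : Nat.card (zpowers (r 1 : DihedralGroup (p ^ n))) = p ^ n := by
      rw [Nat.card_zpowers, orderOf_r_one]
    exact (IsPGroup.of_card hcard).to_le <|
      range_lift_le _ (mem_zpowers _) (by rw [if_pos h]; exact one_mem _)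
  · obtain rfl := hp h
    exact (IsPGroup.of_card (n := n + 1) (by rw [DihedralGroup.nat_card, pow_succ'])).to_subgroup _

theorem pSeparated_zpowers_a_of_toDihedral_eq_r (hp : m ≠ l → p = 2) {s : ℕ} {i : ℤ}
    (hi : ¬(p : ℤ) ^ s ∣ i) {g : BaumslagSolitar l m} (hg : ∀ n, toDihedral hml n g = r i) :
    PSeparated p (zpowers (a ^ (p : ℤ) ^ s)) g := by
  refine ⟨_, isPNormal_ker_toDihedral hml hp s, fun hmem ↦ hi ?_⟩
  rw [mem_sup_ker_iff, MonoidHom.map_zpowers, toDihedral_a_zpow, hg, ← Nat.cast_pow,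
    Int.cast_natCast, ZMod.natCast_self, r_zero, zpowers_one_eq_bot, mem_bot, ← r_zero, r.injEq,
    ZMod.intCast_zmod_eq_zero_iff_dvd] at hmem
  exact_mod_cast hmem

theorem pSeparated_zpowers_b (hG : ResiduallyPGroup p (BaumslagSolitar l m))
    {g : BaumslagSolitar l m} (hg : g ∉ zpowers b) : PSeparated p (zpowers b) g := by
  set ρ : BaumslagSolitar l m →* BaumslagSolitar l m := lift 1 b (by simp)
  have hidem : ρ.comp ρ = ρ := hom_ext (by simp [ρ]) (by simp [ρ])
  have hrange : ρ.range = zpowers b :=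
    (range_lift_le _ (one_mem _) (mem_zpowers b)).antisymm (zpowers_le.2 ⟨b, lift_b _⟩)
  rw [← hrange] at hg ⊢
  exact hG.pSeparated_range_of_retraction (DFunLike.congr_fun hidem) hg

include hml

theorem map_of_toSubgroup (u : ℤˣ) :
    (toSubgroup (zpowers (ofAdd m)) (zpowers (ofAdd l)) u).map of =
      zpowers (a ^ l : BaumslagSolitar l m) := by
  have hu : toSubgroup (zpowers (ofAdd m)) (zpowers (ofAdd l)) u = zpowers (ofAdd l) := by
    obtain rfl | rfl := Int.units_eq_one_or u
    · obtain h | h := hml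
      · rw [toSubgroup_one, h]
      · rw [toSubgroup_one, h, ofAdd_neg, zpowers_inv]
    · rfl
  rw [hu, a_zpow]
  exact MonoidHom.map_zpowers ..

theorem residuallyPGroup (hp : m ≠ l → p = 2) {n : ℕ} (hl : l = (p : ℤ) ^ n) :
    ResiduallyPGroup p (BaumslagSolitar l m) := by
  have hof (i : Multiplicative ℤ) (n : ℕ) :
      toDihedral hml n (of i) = r ((toAdd i : ℤ) : ZMod n) := by
    rw [← toDihedral_a_zpow hml, a_zpow, ofAdd_toAdd]
  refine residuallyPGroup_hnnExtension (fun u i hi ↦ ?_) fun i hi ↦ ?_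
  · have hdvd : ¬ l ∣ toAdd i := by
      rintro ⟨j, hj⟩
      have : (of i : BaumslagSolitar l m) ∈ zpowers (a ^ l) :=
        ⟨j, by dsimp only; rw [← zpow_mul, ← hj, a_zpow, ofAdd_toAdd]⟩
      rw [← map_of_toSubgroup hml u] at this
      exact hi ((Subgroup.mem_map_iff_mem (of_injective _)).1 this)
    rw [map_of_toSubgroup hml]
    subst hl
    exact pSeparated_zpowers_a_of_toDihedral_eq_r hml hp hdvd (hof i)
  · obtain ⟨s, hs⟩ : ∃ s, ¬(p : ℤ) ^ s ∣ toAdd i := by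
      have hfin : FiniteMultiplicity (p : ℤ) (toAdd i) :=
        Int.finiteMultiplicity_iff.2 ⟨(Fact.out : p.Prime).ne_one, hi⟩
      exact ⟨_, hfin.not_pow_dvd_of_multiplicity_lt (Nat.lt_succ_self _)⟩
    exact (pSeparated_zpowers_a_of_toDihedral_eq_r hml hp hs (hof i)).mono bot_le

theorem pSeparated_zpowers_a_zpow (hp : m ≠ l → p = 2) {n : ℕ} (hl : l = (p : ℤ) ^ n) {s : ℕ}
    {g : BaumslagSolitar l m} (hg : g ∉ zpowers (a ^ (p : ℤ) ^ s)) :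
    PSeparated p (zpowers (a ^ (p : ℤ) ^ s)) g := by
  obtain ⟨i, hi | hi⟩ := toDihedral_eq_r_or_eq_sr hml g
  · by_cases hdvd : (p : ℤ) ^ s ∣ i
    · have hne : g * (a ^ i)⁻¹ ≠ 1 := by
        obtain ⟨j, rfl⟩ := hdvd
        exact fun h ↦ hg ⟨j, by rw [mul_inv_eq_one.1 h, zpow_mul]⟩
      obtain ⟨N, hN, hgN⟩ :=
        residuallyPGroup_iff_pSeparated_bot.1 (residuallyPGroup hml hp hl) _ hne
      obtain ⟨Q, _, _, f, hQ, rfl⟩ := hN.exists_ker_eq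
      obtain ⟨M, hM⟩ := hQ (f a)
      refine ⟨_, hN.inf (isPNormal_ker_toDihedral hml hp M), fun hmem ↦ hgN ?_⟩
      obtain ⟨y, hy, x, hx, rfl⟩ := mem_sup_of_normal_right.1 hmem
      obtain ⟨j, rfl⟩ := mem_zpowers_iff.1 hy
      have hij := hi (p ^ M)
      rw [map_mul, hx.2, mul_one, ← zpow_mul, toDihedral_a_zpow, r.injEq,
        ZMod.intCast_eq_intCast_iff_dvd_sub] at hij
      rw [bot_sup_eq, MonoidHom.mem_ker, map_mul, map_mul, hx.1, mul_one, map_inv, map_zpow,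
        map_zpow, map_zpow, ← zpow_mul, mul_inv_eq_one]
      exact zpow_eq_zpow_iff_modEq.2 <| (Int.modEq_iff_dvd.2 hij).of_dvd <|
        Int.natCast_dvd_natCast.2 (orderOf_dvd_of_pow_eq_one hM)
    · exact pSeparated_zpowers_a_of_toDihedral_eq_r hml hp hdvd hi
  · refine ⟨_, isPNormal_ker_toDihedral hml hp 0, fun hmem ↦ ?_⟩
    rw [mem_sup_ker_iff, MonoidHom.map_zpowers, toDihedral_a_zpow, hi] at hmem
    obtain ⟨j, hj⟩ := mem_zpowers_iff.1 hmem
    rw [r_zpow] at hj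
    nomatch hj

end BaumslagSolitar

section WreathProduct

open RegularWreathProduct Multiplicative

/-- The inclusion of the base group of a regular wreath product. -/
def wreathBase (D Q : Type*) [Group D] [Group Q] : (Q → D) →* D ≀ᵣ Q where
  toFun F := ⟨F, 1⟩
  map_one' := rfl
  map_mul' F₁ F₂ := by ext <;> simp

variable {D Q : Type*} [Group D] [Group Q]

theorem wreathBase_injective : Function.Injective (wreathBase D Q) :=
  fun _ _ h ↦ congrArg RegularWreathProduct.left h

theorem semiconjBy_inl_wreathBase {q : Q} {F₁ F₂ : Q → D} (h : ∀ x, F₁ x = F₂ (q * x)) :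
    SemiconjBy (inl q) (wreathBase D Q F₁) (wreathBase D Q F₂) := by
  ext x
  · simp [wreathBase, h]
  · simp [wreathBase]

/-- The inclusion of `D` into the base group of `D ≀ᵣ Q` as the constant functions. -/
def wreathDiag (D Q : Type*) [Group D] [Group Q] : D →* D ≀ᵣ Q :=
  (wreathBase D Q).comp (Pi.constMonoidHom Q D)

theorem wreathDiag_injective : Function.Injective (wreathDiag D Q) :=
  wreathBase_injective.comp Function.const_injective

theorem exists_pow_eq_wreathDiag (n : ℕ) [NeZero n] (d : D) :
    ∃ γ : D ≀ᵣ Multiplicative (ZMod n), γ ^ n = wreathDiag D _ d := by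
  let γ : D ≀ᵣ Multiplicative (ZMod n) := ⟨fun x ↦ if x = 1 then d else 1, ofAdd 1⟩
  have hright (j : ℕ) : (γ ^ j).right = ofAdd (j : ZMod n) := by
    rw [← rightHom_eq_right, map_pow]
    change ofAdd 1 ^ j = _
    rw [← ofAdd_nsmul, nsmul_one]
  have hleft (j : ℕ) (hj : j ≤ n) (x : ZMod n) :
      (γ ^ j).left (ofAdd x) = if x.val < j then d else 1 := by
    induction j with
    | zero => simp
    | succ j ih =>
      have hx : x = j ↔ x.val = j := ⟨fun h ↦ h ▸ ZMod.val_cast_of_lt hj, fun h ↦ by simp [← h]⟩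
      have hsupp : (ofAdd (j : ZMod n))⁻¹ * ofAdd x = 1 ↔ x.val = j := by
        rw [inv_mul_eq_one, ofAdd.injective.eq_iff, eq_comm, hx]
      rw [pow_succ, mul_left, Pi.mul_apply, ih (by lia), hright]
      simp only [γ, hsupp, Nat.lt_succ_iff_lt_or_eq]
      split_ifs <;> first | lia | simp
  refine ⟨γ, RegularWreathProduct.ext (funext fun x ↦ ?_) ?_⟩
  · exact (hleft n le_rfl (toAdd x)).trans (if_pos (ZMod.val_lt _))
  · rw [hright, ZMod.natCast_self]
    rfl

end WreathProduct

namespace BrunnerHNN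

open BaumslagSolitar RegularWreathProduct Multiplicative

variable {l m k : ℤ} [NeZero l] [NeZero m] [NeZero k] [Fact p.Prime] [Finite H]

/-- `t` acts by translation on the base group of a wreath product, and `a` maps to an element of the
base group. -/
theorem exists_comap_le_ker_of_wreathProduct {Q : Type*} [Group Q] [Finite Q] (hH : IsPGroup p H)
    (hQ : IsPGroup p Q) {f : BaumslagSolitar l m →* H} {q : Q} {c : Q → H} (ha : c 1 = f a)
    (hb : c q ^ k = f b) (hc : ∀ x, SemiconjBy (c (q * x) ^ k) (c x ^ m) (c x ^ l)) :
    ∃ N : Subgroup (BrunnerHNN l m k), IsPNormal p N ∧ N.comap HNNExtension.of ≤ f.ker := by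
  let F : BaumslagSolitar l m →* Q → H := MonoidHom.pi fun x ↦
    lift (c x) (c (q * x) ^ k) (hc x).eq
  have hFa : F a = c := funext fun x ↦ lift_a (hc x).eq
  have hFb (x : Q) : F b x = c (q * x) ^ k := lift_b (hc x).eq
  let E : BrunnerHNN l m k →* H ≀ᵣ Q := CyclicHNN.lift ((wreathBase H Q).comp F) (inl q) <| by
    refine (semiconjBy_inl_wreathBase fun x ↦ ?_).eq
    rw [hFb, map_zpow, hFa, Pi.pow_apply]
  refine ⟨E.ker, isPNormal_ker E ((isPGroup_regularWreathProduct hH hQ).to_subgroup _),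
    fun g hg ↦ ?_⟩
  have hFg : F g = 1 := wreathBase_injective <| by
    rw [map_one, ← MonoidHom.comp_apply, ← CyclicHNN.lift_of]
    exact hg
  have hf : f = (Pi.evalMonoidHom _ 1).comp F := hom_ext
    (by simp [hFa, ha]) (by simp [hFb, hb])
  rw [MonoidHom.mem_ker, hf, MonoidHom.comp_apply, hFg, map_one]

theorem exists_comap_le_ker_of_sequence (hH : IsPGroup p H) {f : BaumslagSolitar l m →* H}
    {c : ℕ → H} (ha : c 0 = f a) (hb : c 1 ^ k = f b)
    (hc : ∀ j, SemiconjBy (c (j + 1) ^ k) (c j ^ m) (c j ^ l)) {n : ℕ} (hn : ∀ j ≥ n, c j = 1) :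
    ∃ N : Subgroup (BrunnerHNN l m k), IsPNormal p N ∧ N.comap HNNExtension.of ≤ f.ker := by
  have : NeZero (p ^ (n + 1)) := ⟨pow_ne_zero _ (Fact.out : p.Prime).ne_zero⟩
  have hlt : n + 1 < p ^ (n + 1) := Nat.lt_pow_self (Fact.out : p.Prime).one_lt
  have : Fact (1 < p ^ (n + 1)) := ⟨by lia⟩
  refine exists_comap_le_ker_of_wreathProduct hH (isPGroup_multiplicative_zmod p (n + 1))
    (q := ofAdd (1 : ZMod (p ^ (n + 1)))) (c := fun x ↦ c (toAdd x).val) (by simpa)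
    (by simpa [ZMod.val_one]) fun x ↦ ?_
  by_cases hx : n ≤ (toAdd x).val
  · rw [hn _ hx, one_zpow, one_zpow]
    exact SemiconjBy.one_right _
  · have hval : (toAdd (ofAdd 1 * x)).val = (toAdd x).val + 1 := by
      rw [toAdd_mul, toAdd_ofAdd, add_comm (1 : ZMod _), ZMod.val_add_of_lt] <;> rw [ZMod.val_one]
      lia
    rw [hval]
    exact hc _

theorem exists_comap_le_ker_of_semiconjBy (hH : IsPGroup p H) {f : BaumslagSolitar l m →* H}
    {γ δ : H} (hγ : γ ^ k = f b) (hδ : SemiconjBy (δ ^ k) (γ ^ m) (γ ^ l)) (hδ' : δ ^ m = δ ^ l) :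
    ∃ N : Subgroup (BrunnerHNN l m k), IsPNormal p N ∧ N.comap HNNExtension.of ≤ f.ker := by
  refine exists_comap_le_ker_of_sequence hH (c := fun | 0 => f a | 1 => γ | 2 => δ | _ => 1) rfl hγ
    (n := 3) ?_ ?_
  · rintro (_ | _ | _ | j)
    · exact hγ ▸ semiconjBy_map_b f
    · exact hδ
    · simp [hδ']
    · simp
  · rintro (_ | _ | _ | j) hj <;> lia

/-- The pair of `f` and its twist `a ↦ f a`, `b ↦ (f b)⁻¹`, indexed by `ℤˣ`; the twist respects the
relation because `m = -l`. -/
noncomputable def unitsTwist (hml : m = -l) (f : BaumslagSolitar l m →* G) :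
    BaumslagSolitar l m →* ℤˣ → G :=
  MonoidHom.pi fun x ↦ lift (f a) (f b ^ (x : ℤ)) <| by
    obtain rfl | rfl := Int.units_eq_one_or x
    · simpa using (semiconjBy_map_b f).eq
    · simpa [hml] using (semiconjBy_map_b f).inv_symm_left.inv_right.eq

theorem unitsTwist_b (hml : m = -l) (f : BaumslagSolitar l m →* G) (x : ℤˣ) :
    unitsTwist hml f b x = f b ^ (x : ℤ) := by
  simp [unitsTwist]

theorem ker_unitsTwist_le (hml : m = -l) (f : BaumslagSolitar l m →* G) :
    (unitsTwist hml f).ker ≤ f.ker := by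
  have hf : f = (Pi.evalMonoidHom _ 1).comp (unitsTwist hml f) :=
    hom_ext (by simp [unitsTwist]) (by simp [unitsTwist_b])
  intro g hg
  rw [MonoidHom.mem_ker, hf, MonoidHom.comp_apply, hg, map_one]

theorem exists_comap_le_ker_of_eq_neg {s : ℕ} (hml : m = -l) (hk : k = 2 ^ s) (hkl : k ∣ l)
    (hH : IsPGroup 2 H) {f : BaumslagSolitar l m →* H} {γ : H} (hγ : γ ^ k = f b) :
    ∃ N : Subgroup (BrunnerHNN l m k), IsPNormal 2 N ∧ N.comap HNNExtension.of ≤ f.ker := by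
  let ι := (wreathDiag (H ≀ᵣ ℤˣ) (Multiplicative (ZMod (2 ^ s)))).comp (wreathBase H ℤˣ)
  have hι : Function.Injective ι := wreathDiag_injective.comp wreathBase_injective
  let F := ι.comp (unitsTwist hml f)
  have hF : F.ker ≤ f.ker :=
    (MonoidHom.ker_comp_of_injective _ _ hι).le.trans (ker_unitsTwist_le hml f)
  obtain ⟨δ, hδ⟩ := exists_pow_eq_wreathDiag (2 ^ s) (inl (-1) : H ≀ᵣ ℤˣ)
  have hδk : δ ^ k = wreathDiag _ _ (inl (-1)) := by rw [hk, ← hδ]; norm_cast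
  have hδl : δ ^ m = δ ^ l := by
    obtain ⟨j, rfl⟩ := hkl
    have : δ ^ (k * j) * δ ^ (k * j) = 1 := by
      rw [zpow_mul, ← (Commute.refl (δ ^ k)).mul_zpow, hδk, ← map_mul, ← map_mul]
      simp
    rw [hml, zpow_neg, inv_eq_of_mul_eq_one_left this]
  have hγF : ι (fun x ↦ γ ^ (x : ℤ)) ^ k = F b := by
    rw [← map_zpow]
    refine congrArg ι (funext fun x ↦ ?_)
    rw [Pi.pow_apply, zpow_comm, hγ, unitsTwist_b]
  have hconj : SemiconjBy (δ ^ k) (ι (fun x ↦ γ ^ (x : ℤ)) ^ m) (ι (fun x ↦ γ ^ (x : ℤ)) ^ l) := by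
    rw [hδk, ← map_zpow, ← map_zpow]
    refine (semiconjBy_inl_wreathBase fun x ↦ ?_).map (wreathDiag _ _)
    simp [hml]
  have hW : IsPGroup 2 ((H ≀ᵣ ℤˣ) ≀ᵣ Multiplicative (ZMod (2 ^ s))) :=
    isPGroup_regularWreathProduct
      (isPGroup_regularWreathProduct hH (IsPGroup.of_card (n := 1) (by simp)))
      (isPGroup_multiplicative_zmod 2 s)
  obtain ⟨N, hN, hNF⟩ := exists_comap_le_ker_of_semiconjBy (f := F) hW hγF hconj hδl
  exact ⟨N, hN, hNF.trans hF⟩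

theorem exists_isPNormal_comap_le {s : ℕ} (hk : k = (p : ℤ) ^ s)
    (hml : m = l ∨ m = -l ∧ p = 2 ∧ k ∣ l) {N : Subgroup (BaumslagSolitar l m)}
    (hN : IsPNormal p N) :
    ∃ M : Subgroup (BrunnerHNN l m k), IsPNormal p M ∧ M.comap HNNExtension.of ≤ N := by
  obtain ⟨Q, _, _, f, hQ, rfl⟩ := hN.exists_ker_eq
  have : NeZero (p ^ s) := ⟨pow_ne_zero _ (Fact.out : p.Prime).ne_zero⟩
  let ι := wreathDiag Q (Multiplicative (ZMod (p ^ s)))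
  have hW := isPGroup_regularWreathProduct hQ (isPGroup_multiplicative_zmod p s)
  obtain ⟨γ, hγ⟩ := exists_pow_eq_wreathDiag (p ^ s) (f b)
  have hγk : γ ^ k = (ι.comp f) b := by rw [hk, MonoidHom.comp_apply, ← hγ]; norm_cast
  rw [← MonoidHom.ker_comp_of_injective f ι wreathDiag_injective]
  obtain h | ⟨h, rfl, hkl⟩ := hml
  · exact exists_comap_le_ker_of_semiconjBy (δ := 1) hW hγk (by simp [h]) (by simp)
  · exact exists_comap_le_ker_of_eq_neg h (by exact_mod_cast hk) hkl hW hγk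

theorem residuallyPGroup {r s : ℕ} (hl : l = (p : ℤ) ^ r) (hk : k = (p : ℤ) ^ s)
    (hml : m = l ∨ m = -l ∧ p = 2 ∧ s ≤ r) : ResiduallyPGroup p (BrunnerHNN l m k) := by
  have hml' : m = l ∨ m = -l := hml.imp_right And.left
  have hp : m ≠ l → p = 2 := fun h ↦ (hml.resolve_left h).2.1
  have hBS := BaumslagSolitar.residuallyPGroup hml' hp hl
  refine residuallyPGroup_hnnExtension_of_embedding hBS (fun u g hg ↦ ?_) fun N hN ↦
    exists_isPNormal_comap_le hk (hml.imp_right fun ⟨h, h2, hsr⟩ ↦ ⟨h, h2, ?_⟩) hN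
  · obtain rfl | rfl := Int.units_eq_one_or u
    · exact pSeparated_zpowers_b hBS hg
    · subst hk
      exact pSeparated_zpowers_a_zpow hml' hp hl hg
  · exact hl ▸ hk ▸ pow_dvd_pow _ hsr

end BrunnerHNN

section CyclicSubgroups

open Subgroup
open scoped commutatorElement

theorem zpow_mem_zpowers_zpow_of_pow_dvd [Fact p.Prime] (hG : IsPGroup p G) (x : G) {i j : ℤ}
    (h : ∀ n : ℕ, (p : ℤ) ^ n ∣ i → (p : ℤ) ^ n ∣ j) : x ^ j ∈ zpowers (x ^ i) := by
  obtain ⟨M, hM⟩ := hG x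
  have hdvd : i.gcd ((p ^ M : ℕ) : ℤ) ∣ p ^ M := Int.natCast_dvd_natCast.1 (Int.gcd_dvd_right _ _)
  obtain ⟨n, -, hn⟩ := (Nat.dvd_prime_pow Fact.out).1 hdvd
  obtain ⟨c, rfl⟩ := h n (by exact_mod_cast hn ▸ Int.gcd_dvd_left i ((p ^ M : ℕ) : ℤ))
  rw [← Nat.cast_pow, ← hn, Int.gcd_eq_gcd_ab, zpow_mul, zpow_add, zpow_mul, zpow_mul, zpow_natCast,
    hM, one_zpow, mul_one]
  exact zpow_mem (zpow_mem (mem_zpowers _) _) _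

theorem exists_not_pSeparated_zpow [Fact p.Prime] {G : Type u} [Group G] (x : G) {i : ℤ}
    (hi : i ≠ 0) : ∃ r : ℕ, ¬PSeparated p (zpowers (x ^ i)) (x ^ (p : ℤ) ^ r) := by
  have hfin : FiniteMultiplicity (p : ℤ) i :=
    Int.finiteMultiplicity_iff.2 ⟨(Fact.out : p.Prime).ne_one, hi⟩
  refine ⟨multiplicity (p : ℤ) i, fun ⟨N, hN, hxN⟩ ↦ hxN ?_⟩
  obtain ⟨Q, _, _, f, hQ, rfl⟩ := hN.exists_ker_eq
  rw [mem_sup_ker_iff, MonoidHom.map_zpowers, map_zpow, map_zpow]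
  exact zpow_mem_zpowers_zpow_of_pow_dvd hQ _ fun n hn ↦
    pow_dvd_pow _ (hfin.le_multiplicity_of_pow_dvd hn)

theorem zpow_mem_zpowers_zpow_iff {x : G} (hx : orderOf x = 0) {i j : ℤ} :
    x ^ j ∈ zpowers (x ^ i) ↔ i ∣ j := by
  have hinj := injective_zpow_iff_not_isOfFinOrder.2 (orderOf_eq_zero_iff.1 hx)
  simp only [mem_zpowers_iff, ← zpow_mul, hinj.eq_iff, dvd_def, eq_comm]

theorem zpowers_zpow_eq_of_orderOf_eq [Fact p.Prime] (hG : IsPGroup p G) {x : G} {i j : ℤ}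
    (h : orderOf (x ^ i) = orderOf (x ^ j)) : zpowers (x ^ i) = zpowers (x ^ j) := by
  wlog hij : emultiplicity (p : ℤ) j ≤ emultiplicity (p : ℤ) i generalizing i j
  · exact (this h.symm (le_of_not_ge hij)).symm
  have hfin : Finite (zpowers (x ^ j)) := by
    obtain ⟨n, hn⟩ := hG (x ^ j)
    exact finite_zpowers.2 <| isOfFinOrder_iff_pow_eq_one.2
      ⟨p ^ n, pow_pos (Fact.out : p.Prime).pos n, hn⟩
  refine eq_of_le_of_card_ge (zpowers_le.2 ?_) (by rw [Nat.card_zpowers, Nat.card_zpowers, h])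
  exact zpow_mem_zpowers_zpow_of_pow_dvd hG x (emultiplicity_le_emultiplicity_iff.1 hij)

theorem mem_normalizer_zpowers_of_semiconjBy [Fact p.Prime] (hG : IsPGroup p G) {x y : G} {i j : ℤ}
    (h : SemiconjBy y (x ^ i) (x ^ j)) : y ∈ normalizer (zpowers (x ^ j) : Set G) := by
  rw [← zpowers_zpow_eq_of_orderOf_eq hG (h.orderOf_eq y), mem_normalizer_iff_map_conj_eq,
    MonoidHom.map_zpowers, zpowers_zpow_eq_of_orderOf_eq hG (h.orderOf_eq y)]
  exact congrArg zpowers (mul_inv_eq_of_eq_mul h.eq)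

theorem eq_one_of_mem_commutator_normalClosure [Group.IsNilpotent G] {x : G}
    (hx : x ∈ ⁅normalClosure {x}, (⊤ : Subgroup G)⁆) : x = 1 := by
  obtain ⟨n, hn⟩ := Subgroup.nilpotent_iff_lowerCentralSeries.1 ‹Group.IsNilpotent G›
  have hle (i : ℕ) : normalClosure {x} ≤ (⊤ : Subgroup G).lowerCentralSeries i := by
    induction i with
    | zero => simp
    | succ i ih =>
      exact normalClosure_le_normal (Set.singleton_subset_iff.2 (commutator_mono ih le_rfl hx))
  simpa [hn] using hle n (subset_normalClosure (Set.mem_singleton x))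

theorem eq_one_of_semiconjBy_zpow [Fact p.Prime] [Finite G] (hG : IsPGroup p G) {x y : G} {c : ℤ}
    (h : SemiconjBy y (x ^ c) x) (hc : ¬(p : ℤ) ∣ 1 - c) : x = 1 := by
  have := hG.isNilpotent
  have hpow : x ^ (1 : ℤ) ∈ zpowers (x ^ (1 - c)) :=
    zpow_mem_zpowers_zpow_of_pow_dvd hG x fun n hn ↦ by
      cases n with
      | zero => simp
      | succ n => exact absurd ((dvd_pow_self _ n.succ_ne_zero).trans hn) hc
  have hcomm : ⁅y, x ^ c⁆ = x ^ (1 - c) := by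
    rw [commutatorElement_def, h.eq, mul_inv_cancel_right, zpow_sub, zpow_one]
  rw [← hcomm, zpow_one] at hpow
  refine eq_one_of_mem_commutator_normalClosure (zpowers_le.2 ?_ hpow)
  rw [commutator_comm]
  exact commutator_mem_commutator (mem_top y)
    (zpow_mem (subset_normalClosure (Set.mem_singleton x)) c)

end CyclicSubgroups

section HNNExtension

open HNNExtension Subgroup

variable {G : Type u} [Group G] {A B : Subgroup G} {φ : A ≃* B} {e : ℤˣ} {g u : G}

theorem mem_toSubgroup_of_commute_conj (hu : u ∉ toSubgroup A B (-e))
    (h : Commute ((t ^ (e : ℤ) * of g * (t ^ (e : ℤ))⁻¹)⁻¹ * of u *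
      (t ^ (e : ℤ) * of g * (t ^ (e : ℤ))⁻¹)) (of u : HNNExtension G A B φ)) :
    g ∈ toSubgroup A B e := by
  by_contra hg
  set d : HNNExtension G A B φ := t ^ (e : ℤ) * of g * (t ^ (e : ℤ))⁻¹
  let w : NormalWord.ReducedWord G A B :=
    { head := 1
      toList := [(e, g⁻¹), (-e, u), (e, g), (-e, u), (e, g⁻¹), (-e, u⁻¹), (e, g), (-e, u⁻¹)]
      chain := by simp [hg, hu] }
  have hw : w.prod φ = (d⁻¹ * of u * d) * of u * (d⁻¹ * of u * d)⁻¹ * (of u)⁻¹ := by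
    simp [NormalWord.ReducedWord.prod, w, d, mul_assoc]
  rw [h.eq, mul_inv_cancel_right, mul_inv_cancel] at hw
  have hnil := ReducedWord.toList_eq_nil_of_mem_of_range φ w (hw ▸ one_mem _)
  simp [w] at hnil

theorem exists_mem_toSubgroup_neg_conj {g : G} (hg : g ∈ toSubgroup A B e) :
    ∃ g' ∈ toSubgroup A B (-e),
      (t ^ (e : ℤ) * of g * (t ^ (e : ℤ))⁻¹ : HNNExtension G A B φ) = of g' := by
  obtain rfl | rfl := Int.units_eq_one_or e
  · exact ⟨φ ⟨g, hg⟩, (φ ⟨g, hg⟩).2, by simp [equiv_eq_conj]⟩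
  · exact ⟨φ.symm ⟨g, hg⟩, by simp, by simp [equiv_symm_eq_conj]⟩

theorem pSeparated_toSubgroup_of_residuallyPGroup [Fact p.Prime]
    (hG : ResiduallyPGroup p (HNNExtension G A B φ)) (hu : u ∉ toSubgroup A B (-e))
    (hnorm : ∀ (Q : Type u) [Group Q] [Finite Q] (_ : IsPGroup p Q) (f : HNNExtension G A B φ →* Q),
      (toSubgroup A B (-e)).map (f.comp of) ≤ normalizer (zpowers (f (of u)) : Set Q))
    (hg : g ∉ toSubgroup A B e) : PSeparated p (toSubgroup A B e) g := by
  by_contra hsep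
  refine hg (mem_toSubgroup_of_commute_conj (φ := φ) hu (hG.eq_of_forall_hom fun Q _ _ hQ f ↦ ?_))
  obtain ⟨a, ha, hag⟩ : f (of g) ∈ (toSubgroup A B e).map (f.comp of) := by
    by_contra hfg
    exact hsep (pSeparated_of_hom (f := f.comp of) hQ hfg)
  obtain ⟨a', ha', haa'⟩ := exists_mem_toSubgroup_neg_conj (φ := φ) ha
  have hconj : f (t ^ (e : ℤ) * of g * (t ^ (e : ℤ))⁻¹) = f (of a') := by
    rw [← haa', map_mul, map_mul, map_mul f, map_mul f, ← hag, MonoidHom.comp_apply]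
  have hmem := (mem_normalizer_iff''.1 (hnorm Q hQ f (mem_map_of_mem _ ha')) _).1
    (mem_zpowers (f (of u)))
  obtain ⟨i, hi⟩ := mem_zpowers_iff.1 hmem
  rw [MonoidHom.comp_apply, ← hconj, ← map_inv, ← map_mul, ← map_mul] at hi
  rw [map_mul f _ (of u), map_mul f (of u), ← hi]
  exact ((Commute.refl (f (of u))).zpow_left i).eq

end HNNExtension

namespace BaumslagSolitar

open HNNExtension Multiplicative Subgroup

variable {l m : ℤ} [NeZero l] [NeZero m]

theorem a_zpow_ne_one (i : ℤ) [NeZero i] : (a : BaumslagSolitar l m) ^ i ≠ 1 := by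
  intro h
  simpa [h] using orderOf_a_zpow (l := l) (m := m) i

theorem orderOf_a : orderOf (a : BaumslagSolitar l m) = 0 := by
  simpa only [zpow_one] using orderOf_a_zpow 1

theorem a_zpow_notMem_zpowers_b (i : ℤ) [NeZero i] : (a : BaumslagSolitar l m) ^ i ∉ zpowers b := by
  intro h
  obtain ⟨j, hj⟩ := mem_zpowers_iff.1 h
  have hmap := congrArg (lift 1 b (by simp) : BaumslagSolitar l m →* BaumslagSolitar l m) hj
  rw [map_zpow, map_zpow, lift_a, lift_b, one_zpow, hj] at hmap
  exact a_zpow_ne_one i hmap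

/-- The isomorphism inverting the stable letter. -/
noncomputable def swapMulEquiv (l m : ℤ) [NeZero l] [NeZero m] :
    BaumslagSolitar l m ≃* BaumslagSolitar m l :=
  MonoidHom.toMulEquiv (lift a b⁻¹ (SemiconjBy.inv_symm_left b_mul_a_zpow).eq)
    (lift a b⁻¹ (SemiconjBy.inv_symm_left b_mul_a_zpow).eq)
    (hom_ext (by simp) (by simp)) (hom_ext (by simp) (by simp))

variable [Fact p.Prime] (hG : ResiduallyPGroup p (BaumslagSolitar l m))

include hG

theorem pow_dvd_of_residuallyPGroup {n : ℕ} (hm : (p : ℤ) ^ n ∣ m) : (p : ℤ) ^ n ∣ l := by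
  by_contra hl
  have hp : Prime (p : ℤ) := Nat.prime_iff_prime_int.1 Fact.out
  have hdvd (i : ℕ) (hi : (p : ℤ) ^ i ∣ l * p) : (p : ℤ) ^ i ∣ m := by
    refine (pow_dvd_pow _ (not_lt.1 fun hni ↦ hl ?_)).trans hm
    exact (mul_dvd_mul_iff_right hp.ne_zero).1 (pow_succ (p : ℤ) n ▸ (pow_dvd_pow _ hni).trans hi)
  refine a_zpow_ne_one l (hG.eq_of_forall_hom fun Q _ _ hQ f ↦ ?_)
  obtain ⟨i, hi⟩ := mem_zpowers_iff.1 (zpow_mem_zpowers_zpow_of_pow_dvd hQ (f a) hdvd)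
  have hb := semiconjBy_map_b f
  rw [← hi, ← zpow_mul, mul_assoc, zpow_mul] at hb
  rw [map_one, map_zpow]
  refine eq_one_of_semiconjBy_zpow hQ hb fun h ↦ hp.not_dvd_one ?_
  exact (dvd_sub_left (dvd_mul_right _ _)).1 h

theorem pow_dvd_iff_of_residuallyPGroup (n : ℕ) : (p : ℤ) ^ n ∣ m ↔ (p : ℤ) ^ n ∣ l :=
  ⟨pow_dvd_of_residuallyPGroup hG,
    pow_dvd_of_residuallyPGroup ((ResiduallyPGroup.congr (swapMulEquiv l m)).1 hG)⟩

theorem exists_dvd_pow_of_not_isUnit (hl : ¬IsUnit l) : ∃ r : ℕ, m ∣ (p : ℤ) ^ r := by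
  obtain ⟨r, hr⟩ := exists_not_pSeparated_zpow (p := p) (ofAdd (1 : ℤ)) (NeZero.ne m)
  have hord : orderOf (ofAdd (1 : ℤ)) = 0 := orderOf_ofAdd_eq_zero 1
  have hof (i : ℤ) : ofAdd i = ofAdd 1 ^ i := by rw [← ofAdd_zsmul, smul_eq_mul, mul_one]
  refine ⟨r, (zpow_mem_zpowers_zpow_iff hord).1 ?_⟩
  by_contra hmem
  rw [← hof m] at hr hmem
  refine hr (pSeparated_toSubgroup_of_residuallyPGroup (e := 1) (u := ofAdd 1) hG ?_ ?_ hmem)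
  · have h1 := (zpow_mem_zpowers_zpow_iff hord (i := l) (j := 1)).not.2 (mt isUnit_of_dvd_one hl)
    rwa [zpow_one, ← hof l] at h1
  · intro Q _ _ _ f
    have htop : zpowers (ofAdd (1 : ℤ)) = ⊤ := eq_top_iff.2 fun i _ ↦ ⟨toAdd i, (hof _).symm⟩
    refine (map_mono (le_top.trans_eq htop.symm)).trans ?_
    rw [MonoidHom.map_zpowers]
    exact le_normalizer

theorem eq_two_of_residuallyPGroup_of_eq_neg (hml : m = -l) : p = 2 := by
  subst hml
  by_contra hp
  have hdvd : ¬(p : ℤ) ∣ 1 - -1 := fun h ↦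
    hp ((Nat.prime_dvd_prime_iff_eq Fact.out Nat.prime_two).1 (Int.natCast_dvd_natCast.1 h))
  refine a_zpow_ne_one l (hG.eq_of_forall_hom fun Q _ _ hQ f ↦ ?_)
  have hb : SemiconjBy (f b) ((f a ^ l) ^ (-1 : ℤ)) (f a ^ l) := by
    simpa only [zpow_neg, zpow_one] using semiconjBy_map_b f
  rw [map_one, map_zpow]
  exact eq_one_of_semiconjBy_zpow hQ hb hdvd

end BaumslagSolitar

namespace BrunnerHNN

open HNNExtension BaumslagSolitar Subgroup
open scoped commutatorElement

variable {l m k : ℤ} [NeZero l] [NeZero m] [NeZero k] [Fact p.Prime]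
  (hG : ResiduallyPGroup p (BrunnerHNN l m k))

include hG

theorem residuallyPGroup_baumslagSolitar : ResiduallyPGroup p (BaumslagSolitar l m) :=
  hG.of_injective (of_injective _)

theorem pSeparated_zpowers_a_zpow {g : BaumslagSolitar l m} (hg : g ∉ zpowers (a ^ k)) :
    PSeparated p (zpowers (a ^ k)) g := by
  rw [← toSubgroup_neg_one (zpowers b) (zpowers (a ^ k))] at hg ⊢
  refine pSeparated_toSubgroup_of_residuallyPGroup (e := -1) hG (u := a ^ l) ?_
    (fun Q _ _ hQ f ↦ ?_) hg
  · rw [neg_neg, toSubgroup_one]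
    exact a_zpow_notMem_zpowers_b l
  · rw [neg_neg, toSubgroup_one, MonoidHom.map_zpowers, zpowers_le, map_zpow, map_zpow]
    exact mem_normalizer_zpowers_of_semiconjBy hQ (semiconjBy_map_b (f.comp of))

theorem exists_associated_prime_pow_k : ∃ s : ℕ, Associated k ((p : ℤ) ^ s) := by
  obtain ⟨s, hs⟩ := exists_not_pSeparated_zpow (p := p) (a : BaumslagSolitar l m) (NeZero.ne k)
  have hk : k ∣ (p : ℤ) ^ s :=
    (zpow_mem_zpowers_zpow_iff orderOf_a).1 (not_imp_comm.1 (pSeparated_zpowers_a_zpow hG) hs)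
  obtain ⟨i, -, hi⟩ := (dvd_prime_pow (Nat.prime_iff_prime_int.1 Fact.out) _).1 hk
  exact ⟨i, hi⟩

theorem dvd_of_isUnit (hl : IsUnit l) : m ∣ l := by
  have hconj : (b : BaumslagSolitar l m) * a ^ k * b⁻¹ ∈ zpowers (a ^ k) := by
    by_contra hmem
    obtain ⟨N, hN, hbN⟩ := pSeparated_zpowers_a_zpow hG hmem
    obtain ⟨Q, _, _, f, hQ, rfl⟩ := hN.exists_ker_eq
    refine hbN (mem_sup_ker_iff.2 ?_)
    have hnorm := mem_normalizer_zpowers_of_semiconjBy hQ (semiconjBy_map_b f)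
    have hal : zpowers (f a ^ l) = zpowers (f a) := by
      obtain rfl | rfl := Int.isUnit_iff.1 hl <;> simp
    rw [hal] at hnorm
    obtain ⟨i, hi⟩ := mem_zpowers_iff.1 <| (mem_normalizer_iff.1 hnorm _).1 (mem_zpowers (f a))
    rw [map_mul, map_mul, map_inv, MonoidHom.map_zpowers, map_zpow, ← conj_zpow, ← hi, ← zpow_mul,
      mul_comm, zpow_mul]
    exact zpow_mem (mem_zpowers _) _
  obtain ⟨i, hi⟩ := mem_zpowers_iff.1 hconj
  have hpow : (b : BaumslagSolitar l m) * a ^ (m * k) * b⁻¹ = a ^ (l * k) := by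
    rw [zpow_mul, ← conj_zpow, b_mul_a_zpow, mul_inv_cancel_right, zpow_mul]
  rw [mul_comm m, zpow_mul, ← conj_zpow, ← hi, ← zpow_mul, ← zpow_mul, mul_comm l,
    (injective_zpow_iff_not_isOfFinOrder.2 (orderOf_eq_zero_iff.1 orderOf_a)).eq_iff] at hpow
  exact ⟨i, (mul_comm i m ▸ mul_left_cancel₀ (NeZero.ne k) hpow).symm⟩

theorem exists_associated_prime_pow (hlm : |l| ≤ |m|) :
    ∃ r : ℕ, Associated l ((p : ℤ) ^ r) ∧ Associated m ((p : ℤ) ^ r) := by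
  have hBS := residuallyPGroup_baumslagSolitar hG
  have hp : Prime (p : ℤ) := Nat.prime_iff_prime_int.1 Fact.out
  obtain ⟨⟨i, hi⟩, j, hj⟩ : (∃ i : ℕ, l ∣ (p : ℤ) ^ i) ∧ ∃ j : ℕ, m ∣ (p : ℤ) ^ j := by
    by_cases hl : IsUnit l
    · exact ⟨⟨0, hl.dvd⟩, 0, (isUnit_of_dvd_unit (dvd_of_isUnit hG hl) hl).dvd⟩
    · have hm : ¬IsUnit m := by
        rw [Int.isUnit_iff_abs_eq] at hl ⊢
        have := abs_pos.2 (NeZero.ne l)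
        lia
      exact ⟨exists_dvd_pow_of_not_isUnit ((ResiduallyPGroup.congr (swapMulEquiv l m)).1 hBS) hm,
        exists_dvd_pow_of_not_isUnit hBS hl⟩
  obtain ⟨r, -, hr⟩ := (dvd_prime_pow hp _).1 hi
  obtain ⟨q, -, hq⟩ := (dvd_prime_pow hp _).1 hj
  have h := pow_dvd_iff_of_residuallyPGroup hBS
  have hml : Associated m l :=
    associated_of_dvd_dvd (hq.dvd.trans ((h q).1 hq.symm.dvd)) (hr.dvd.trans ((h r).2 hr.symm.dvd))
  exact ⟨r, hr, hml.trans hr⟩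

theorem not_sub_dvd_k : ¬l - m ∣ k := by
  rintro ⟨c, hc⟩
  have hone : (of (a ^ k) : BrunnerHNN l m k) = 1 := by
    refine hG.eq_of_forall_hom fun Q _ _ hQ f ↦ ?_
    have := hQ.isNilpotent
    rw [map_one]
    refine eq_one_of_mem_commutator_normalClosure ?_
    have hb : f (of b) ∈ normalClosure {f (of (a ^ k))} := by
      rw [of_b, map_mul, map_mul, map_inv, ← map_zpow of]
      exact normalClosure_normal.conj_mem' _ (subset_normalClosure (Set.mem_singleton _)) _
    have hcomm : ⁅f (of b), f (of a) ^ m⁆ = f (of a) ^ (l - m) := by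
      have := (semiconjBy_map_b (f.comp of)).eq
      rw [MonoidHom.comp_apply, MonoidHom.comp_apply] at this
      rw [commutatorElement_def, this, mul_inv_cancel_right, zpow_sub]
    have ha : f (of (a ^ k)) = ⁅f (of b), f (of a) ^ m⁆ ^ c := by
      rw [hcomm, map_zpow, map_zpow, ← zpow_mul, ← hc]
    nth_rw 2 [ha]
    exact zpow_mem (commutator_mem_commutator hb (mem_top _)) c
  exact a_zpow_ne_one k ((map_eq_one_iff _ (of_injective _)).1 hone)

theorem exponent_le_of_eq_neg {r s : ℕ} (hml : m = -l) (hl : l = (p : ℤ) ^ r)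
    (hk : k = (p : ℤ) ^ s) : s ≤ r := by
  have hp : p = 2 := eq_two_of_residuallyPGroup_of_eq_neg (residuallyPGroup_baumslagSolitar hG) hml
  by_contra! hrs
  refine not_sub_dvd_k hG ?_
  rw [hml, sub_neg_eq_add, ← mul_two, hl, hk, hp, Nat.cast_two, ← pow_succ]
  exact pow_dvd_pow 2 hrs

theorem exists_eq_prime_pow (hl : 0 < l) (hlm : l ≤ |m|) (hk : 0 < k) :
    ∃ r s : ℕ, |m| = l ∧ l = (p : ℤ) ^ r ∧ k = (p : ℤ) ^ s ∧ (m = -l → p = 2 ∧ s ≤ r) := by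
  obtain ⟨s, hs⟩ := exists_associated_prime_pow_k hG
  obtain ⟨r, hlr, hmr⟩ := exists_associated_prime_pow hG (by rwa [abs_of_pos hl])
  have hlr' := Int.eq_of_associated_of_nonneg hlr hl.le (by positivity)
  have hks := Int.eq_of_associated_of_nonneg hs hk.le (by positivity)
  refine ⟨r, s, ?_, hlr', hks, fun hml ↦ ⟨?_, exponent_le_of_eq_neg hG hml hlr' hks⟩⟩
  · rw [Int.abs_eq_natAbs, Int.associated_iff_natAbs.1 (hmr.trans hlr.symm), ← Int.abs_eq_natAbs,
      abs_of_pos hl]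
  · exact eq_two_of_residuallyPGroup_of_eq_neg (residuallyPGroup_baumslagSolitar hG) hml

end BrunnerHNN

/-- **Theorem 4.** For `|m| ≥ l > 0` and `k > 0`, the group
`H(l,m;k) = ⟨a, t; t⁻¹a⁻ᵏt·aˡ·t⁻¹aᵏt = aᵐ⟩` is residually a finite `p`-group iff
`|m| = l = p^r` and `k = p^s` for some `r, s ≥ 0`, and moreover `p = 2` and `s ≤ r`
whenever `m = -l`. -/
theorem brunner_residually_p_iff (p : ℕ) (hp : p.Prime) (l m k : ℤ)
    (hl : 0 < l) (hml : l ≤ |m|) (hk : 0 < k) :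
    ResiduallyPGroup p (BrunnerGroup l m k) ↔
      ∃ r s : ℕ, |m| = l ∧ l = (p : ℤ) ^ r ∧ k = (p : ℤ) ^ s ∧
        (m = -l → p = 2 ∧ s ≤ r) := by
  have : Fact p.Prime := ⟨hp⟩
  have : NeZero l := ⟨hl.ne'⟩
  have : NeZero m := ⟨abs_pos.1 (hl.trans_le hml)⟩
  have : NeZero k := ⟨hk.ne'⟩
  rw [ResiduallyPGroup.congr (brunnerGroupMulEquiv l m k)]
  refine ⟨fun hG ↦ BrunnerHNN.exists_eq_prime_pow hG hl hml hk, ?_⟩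
  rintro ⟨r, s, hm, hlr, hks, hneg⟩
  exact BrunnerHNN.residuallyPGroup hlr hks
    ((eq_or_eq_neg_of_abs_eq hm).imp_right fun h ↦ ⟨h, hneg h⟩)
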